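/- arXiv:2003.08726 — 4 statements merged into one kernel-verified Lean document; each statement's English description precedes it below -/
import Mathlib

section
/- Let γ ∈ (0,1), k > 0, c := 2|ln γ| √(k / ((ln γ)² + π²)), ω := √(k - c²/4), v₀ ∈ ℝ, and define q(τ) := (v₀/ω) e^{-cτ/2} sin(ωτ) and v(τ) := v₀ e^{-cτ/2} (cos(ωτ) - (c/(2ω)) sin(ωτ)), the solution of the spring-damper ODE with q(0)=0, v(0)=v₀. Then at τ_jump := π/ω one has q(τ_jump) = 0 and v(τ_jump) = -γ v₀; i.e., the endpoint of the spring-damper trajectory satisfies Newton's restitution law with coefficient γ. -/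
/-!
Put `S = √(k / ((ln γ)² + π²)) > 0`, so that `k = ((ln γ)² + π²) S²` and `c = 2 |ln γ| S`. Then
`k - c² / 4 = π² S²`, hence `ω = π S`, and the jump time is `π / ω = 1 / S`. The damping formula is
designed so that `c τ / 2 = |ln γ| = -ln γ` at this time: the exponential factor there equals `γ`,
while `sin (ω τ) = sin π = 0` and `cos (ω τ) = cos π = -1`.
-/

/-- The spring-damper trajectory with q(0)=0, v(0)=v₀, damping
c = 2|ln γ|√(k/((ln γ)²+π²)) and ω = √(k - c²/4) satisfies Newton's restitution
law at τ_jump = π/ω: q(τ_jump) = 0 and v(τ_jump) = -γ v₀. -/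
theorem spring_damper_restitution (γ k : ℝ) (hγ : γ ∈ Set.Ioo (0 : ℝ) 1) (hk : 0 < k)
    (c ω : ℝ)
    (hc : c = 2 * |Real.log γ| * Real.sqrt (k / ((Real.log γ) ^ 2 + Real.pi ^ 2)))
    (hω : ω = Real.sqrt (k - c ^ 2 / 4)) (v₀ : ℝ)
    (q v : ℝ → ℝ)
    (hq : q = fun τ => (v₀ / ω) * Real.exp (-c * τ / 2) * Real.sin (ω * τ))
    (hv : v = fun τ => v₀ * Real.exp (-c * τ / 2) *
      (Real.cos (ω * τ) - (c / (2 * ω)) * Real.sin (ω * τ)))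
    (τjump : ℝ) (hτ : τjump = Real.pi / ω) :
    q τjump = 0 ∧ v τjump = -γ * v₀ := by
  obtain ⟨hγ0, hγ1⟩ := hγ
  have hπ := Real.pi_pos
  have hL : Real.log γ < 0 := Real.log_neg hγ0 hγ1
  have hD : 0 < Real.log γ ^ 2 + Real.pi ^ 2 := by positivity
  rw [abs_of_neg hL] at hc
  set S := Real.sqrt (k / (Real.log γ ^ 2 + Real.pi ^ 2)) with hS
  have hS0 : 0 < S := Real.sqrt_pos.mpr (div_pos hk hD)
  have hk' : k = (Real.log γ ^ 2 + Real.pi ^ 2) * S ^ 2 := by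
    rw [hS, Real.sq_sqrt (div_pos hk hD).le, mul_div_cancel₀ _ hD.ne']
  have hωS : ω = Real.pi * S := by
    have h : k - c ^ 2 / 4 = (Real.pi * S) ^ 2 := by
      rw [hc]
      linear_combination hk'
    rw [hω, h, Real.sqrt_sq (by positivity)]
  have hω0 : ω ≠ 0 := by
    rw [hωS]
    positivity
  have hωτ : ω * τjump = Real.pi := by
    rw [hτ, mul_div_cancel₀ _ hω0]
  have hexp : Real.exp (-c * τjump / 2) = γ := by
    have h : -c * τjump / 2 = Real.log γ := by
      rw [hτ, hωS, hc]
      field_simp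
    rw [h, Real.exp_log hγ0]
  subst hq hv
  simp only [hωτ, hexp, Real.sin_pi, Real.cos_pi]
  constructor <;> ring
end

section
/- Let n ∈ ℝ^m with ‖n‖ = 1, γ ∈ (0,1), k > 0, c := 2|ln γ| √(k / ((ln γ)² + π²)), and τ_jump := √((π² + (ln γ)²)/k). Let (q, v) : [0, τ_jump] → ℝ^m × ℝ^m be differentiable and satisfy q'(τ) = ⟨n, v(τ)⟩ n and v'(τ) = (-k ⟨n, q(τ)⟩ - c ⟨n, v(τ)⟩) n, with ⟨n, q(0)⟩ = 0 and ⟨n, v(0)⟩ < 0. Then ⟨n, q(τ)⟩ < 0 for all τ ∈ (0, τ_jump), and the endpoint satisfies q(τ_jump) = q(0) and v(τ_jump) = v(0) - (1+γ) ⟨n, v(0)⟩ n; i.e., the auxiliary dynamics stays in the prohibited region during the restitution phase and its endpoint realizes Newton's restitution law with coefficient γ for the constraint with normal n. -/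
/-!
Put `x = ⟪n, q⟫`, `y = ⟪n, v⟫`, `T = τjump`, `a = -log γ / T` and `ω = π / T`. The choice of `c`
and `T` amounts to `c = 2 a` and `k = a ^ 2 + ω ^ 2`, so `(x, y)` solves the underdamped oscillator
`x' = y`, `y' = -(a ^ 2 + ω ^ 2) x - 2 a y` with `x 0 = 0`. With `X = exp (a t) x` and
`Z = exp (a t) (y + a x)` this becomes the pure rotation `X' = Z`, `Z' = -ω ^ 2 X`, whose first
integrals `ω X cos ωt - Z sin ωt` and `ω X sin ωt + Z cos ωt` give `ω X = y 0 sin ωt` and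
`Z = y 0 cos ωt` (`oscillator_solution`). As `ω T = π`, `x` is negative on `(0, T)`, `x T = 0` and
`y T = -exp (-a T) y 0 = -γ y 0`. The motion tangential to the constraint is frozen:
`q - x n` and `v - y n` have zero derivative, which recovers `q T` and `v T`.
-/

open scoped RealInnerProductSpace

lemma const_of_hasDerivWithinAt_zero {E : Type*} [NormedAddCommGroup E] [NormedSpace ℝ E]
    {f : ℝ → E} {T : ℝ} (hf : ∀ t ∈ Set.Icc 0 T, HasDerivWithinAt f 0 (Set.Icc 0 T) t)
    {t : ℝ} (ht : t ∈ Set.Icc 0 T) : f t = f 0 := by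
  have h := (convex_Icc (0 : ℝ) T).norm_image_sub_le_of_norm_hasDerivWithin_le (C := 0)
    hf (fun _ _ => by simp) (Set.left_mem_Icc.2 (ht.1.trans ht.2)) ht
  rw [zero_mul] at h
  exact sub_eq_zero.1 (norm_le_zero_iff.1 h)

/-- Solution formula for the underdamped oscillator with decay rate `a` and angular frequency `ω`
started at position `0`, cleared of the factors `ω⁻¹` and `exp (-a t)`. -/
lemma oscillator_solution {x y : ℝ → ℝ} {a ω T : ℝ}
    (hx : ∀ t ∈ Set.Icc 0 T, HasDerivWithinAt x (y t) (Set.Icc 0 T) t)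
    (hy : ∀ t ∈ Set.Icc 0 T,
      HasDerivWithinAt y (-(a ^ 2 + ω ^ 2) * x t - 2 * a * y t) (Set.Icc 0 T) t)
    (hx0 : x 0 = 0) {t : ℝ} (ht : t ∈ Set.Icc 0 T) :
    ω * (Real.exp (a * t) * x t) = y 0 * Real.sin (ω * t) ∧
    Real.exp (a * t) * (y t + a * x t) = y 0 * Real.cos (ω * t) := by
  have hlin (b s : ℝ) : HasDerivWithinAt (fun s : ℝ => b * s) b (Set.Icc 0 T) s := by
    simpa using ((hasDerivAt_id s).const_mul b).hasDerivWithinAt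
  have hX : ∀ s ∈ Set.Icc 0 T, HasDerivWithinAt (fun s => Real.exp (a * s) * x s)
      (Real.exp (a * s) * (y s + a * x s)) (Set.Icc 0 T) s := fun s hs =>
    ((hlin a s).exp.mul (hx s hs)).congr_deriv (by ring)
  have hZ : ∀ s ∈ Set.Icc 0 T, HasDerivWithinAt (fun s => Real.exp (a * s) * (y s + a * x s))
      (-ω ^ 2 * (Real.exp (a * s) * x s)) (Set.Icc 0 T) s := fun s hs =>
    ((hlin a s).exp.mul ((hy s hs).add ((hx s hs).const_mul a))).congr_deriv (by
      simp only [Pi.add_apply]; ring)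
  have hA := const_of_hasDerivWithinAt_zero
    (f := fun s => ω * (Real.exp (a * s) * x s) * Real.cos (ω * s)
      - Real.exp (a * s) * (y s + a * x s) * Real.sin (ω * s))
    (fun s hs => ((((hX s hs).const_mul ω).mul (hlin ω s).cos).sub
      ((hZ s hs).mul (hlin ω s).sin)).congr_deriv (by ring)) ht
  have hB := const_of_hasDerivWithinAt_zero
    (f := fun s => ω * (Real.exp (a * s) * x s) * Real.sin (ω * s)
      + Real.exp (a * s) * (y s + a * x s) * Real.cos (ω * s))
    (fun s hs => ((((hX s hs).const_mul ω).mul (hlin ω s).sin).add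
      ((hZ s hs).mul (hlin ω s).cos)).congr_deriv (by ring)) ht
  simp only [hx0, mul_zero, Real.exp_zero, Real.sin_zero, Real.cos_zero, add_zero, sub_zero,
    mul_one, one_mul, zero_add] at hA hB
  have hsc := Real.sin_sq_add_cos_sq (ω * t)
  -- The inverse rotation applied to the two first integrals.
  constructor
  · linear_combination Real.cos (ω * t) * hA + Real.sin (ω * t) * hB
      - ω * (Real.exp (a * t) * x t) * hsc
  · linear_combination -Real.sin (ω * t) * hA + Real.cos (ω * t) * hB
      - Real.exp (a * t) * (y t + a * x t) * hsc

/-- The auxiliary impact dynamics for the constraint with unit normal n,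
with damping c = 2|ln γ|√(k/((ln γ)²+π²)), started on the switching surface with
inward normal velocity, stays in the prohibited region {⟨n,q⟩ < 0} during the
restitution phase (0, τ_jump), τ_jump = √((π²+(ln γ)²)/k), and its endpoint realizes
Newton's restitution law: q(τ_jump) = q(0) and v(τ_jump) = v(0) - (1+γ)⟨n,v(0)⟩n. -/
theorem aux_dynamics_newton_restitution (m : ℕ) (n : EuclideanSpace ℝ (Fin m))
    (hn : ‖n‖ = 1) (γ k : ℝ) (hγ : γ ∈ Set.Ioo (0 : ℝ) 1) (hk : 0 < k)
    (c τjump : ℝ)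
    (hc : c = 2 * |Real.log γ| * Real.sqrt (k / ((Real.log γ) ^ 2 + Real.pi ^ 2)))
    (hτ : τjump = Real.sqrt ((Real.pi ^ 2 + (Real.log γ) ^ 2) / k))
    (q v : ℝ → EuclideanSpace ℝ (Fin m))
    (hq : ∀ τ ∈ Set.Icc 0 τjump,
      HasDerivWithinAt q ((⟪n, v τ⟫) • n) (Set.Icc 0 τjump) τ)
    (hv : ∀ τ ∈ Set.Icc 0 τjump,
      HasDerivWithinAt v ((-k * ⟪n, q τ⟫ - c * ⟪n, v τ⟫) • n) (Set.Icc 0 τjump) τ)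
    (hq0 : ⟪n, q 0⟫ = 0) (hv0 : ⟪n, v 0⟫ < 0) :
    (∀ τ ∈ Set.Ioo 0 τjump, ⟪n, q τ⟫ < 0) ∧
    q τjump = q 0 ∧
    v τjump = v 0 - ((1 + γ) * ⟪n, v 0⟫) • n := by
  obtain ⟨hγ0, hγ1⟩ := hγ
  have hlog : Real.log γ < 0 := Real.log_neg hγ0 hγ1
  have hπ := Real.pi_pos
  have hS : 0 < Real.pi ^ 2 + Real.log γ ^ 2 := by positivity
  have hT : 0 < τjump := by rw [hτ]; positivity
  have hT2 : τjump ^ 2 = (Real.pi ^ 2 + Real.log γ ^ 2) / k := by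
    rw [hτ, Real.sq_sqrt (by positivity)]
  have hc' : c = 2 * (-Real.log γ / τjump) := by
    have : Real.sqrt (k / (Real.log γ ^ 2 + Real.pi ^ 2)) = τjump⁻¹ := by
      rw [hτ, ← Real.sqrt_inv, inv_div, add_comm]
    rw [hc, this, abs_of_neg hlog]
    ring
  have hk' : k = (-Real.log γ / τjump) ^ 2 + (Real.pi / τjump) ^ 2 := by
    rw [div_pow, div_pow, ← add_div, hT2]
    field_simp
    ring
  -- Pairing with the unit vector `n` turns a derivative `r • n` into `r`.
  have hpair {f : ℝ → EuclideanSpace ℝ (Fin m)} {r t : ℝ}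
      (hf : HasDerivWithinAt f (r • n) (Set.Icc 0 τjump) t) :
      HasDerivWithinAt (fun s => ⟪n, f s⟫) r (Set.Icc 0 τjump) t := by
    simpa [real_inner_smul_right, hn] using
      (hasDerivWithinAt_const t (Set.Icc 0 τjump) n).inner ℝ hf
  -- The component orthogonal to `n` does not move.
  have htang {f : ℝ → EuclideanSpace ℝ (Fin m)} {r : ℝ → ℝ}
      (hf : ∀ t ∈ Set.Icc 0 τjump, HasDerivWithinAt f (r t • n) (Set.Icc 0 τjump) t) :
      f τjump - ⟪n, f τjump⟫ • n = f 0 - ⟪n, f 0⟫ • n :=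
    const_of_hasDerivWithinAt_zero (f := fun s => f s - ⟪n, f s⟫ • n)
      (fun t ht => ((hf t ht).sub ((hpair (hf t ht)).smul_const n)).congr_deriv (sub_self _))
      (Set.right_mem_Icc.2 hT.le)
  have hsol {t : ℝ} (ht : t ∈ Set.Icc 0 τjump) :=
    oscillator_solution (x := fun s => ⟪n, q s⟫) (y := fun s => ⟪n, v s⟫)
      (fun s hs => hpair (hq s hs))
      (fun s hs => (hpair (hv s hs)).congr_deriv (by rw [← hk', ← hc'])) hq0 ht
  have hω : 0 < Real.pi / τjump := by positivity
  obtain ⟨hqT, hvT⟩ := hsol (Set.right_mem_Icc.2 hT.le)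
  simp only [div_mul_cancel₀ _ hT.ne', Real.sin_pi, Real.cos_pi, mul_zero] at hqT hvT
  have hqT' : ⟪n, q τjump⟫ = 0 := by
    simpa [hω.ne', (Real.exp_pos _).ne'] using hqT
  have hvT' : ⟪n, v τjump⟫ = -γ * ⟪n, v 0⟫ := by
    rw [hqT', mul_zero, add_zero, Real.exp_neg, Real.exp_log hγ0] at hvT
    field_simp at hvT
    linarith
  refine ⟨fun t ht => ?_, ?_, ?_⟩
  · have h := (hsol (Set.Ioo_subset_Icc_self ht)).1
    have hsin : 0 < Real.sin (Real.pi / τjump * t) := by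
      apply Real.sin_pos_of_pos_of_lt_pi (mul_pos hω ht.1)
      rw [div_mul_eq_mul_div, div_lt_iff₀ hT]
      exact mul_lt_mul_of_pos_left ht.2 hπ
    by_contra! hneg
    have h1 := mul_neg_of_neg_of_pos hv0 hsin
    have h2 := mul_nonneg hω.le (mul_nonneg (Real.exp_pos (-Real.log γ / τjump * t)).le hneg)
    linarith
  · have h := htang hq
    rwa [hqT', hq0, zero_smul, sub_zero, sub_zero] at h
  · have h := htang hv
    rw [hvT', sub_eq_iff_eq_add] at h
    rw [h]
    module
end

section
/- Let γ ∈ (0,1), k > 0, c := 2|ln γ| √(k / ((ln γ)² + π²)), τ_jump := √((π² + (ln γ)²)/k), and v₀ < 0. Suppose (q̃, ṽ) : [0, τ_jump] → ℝ × ℝ is differentiable, satisfies q̃'(τ) = ṽ(τ) and ṽ'(τ) = -k q̃(τ) - c ṽ(τ) for all τ ∈ [0, τ_jump], with q̃(0) = 0 and ṽ(0) = v₀. Then: (i) q̃(τ) < 0 for all τ ∈ (0, τ_jump); (ii) q̃(τ_jump) = 0 and ṽ(τ_jump) = -γ v₀ > 0; and (iii) τ_jump is the first positive time at which q̃ vanishes.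 In particular, the auxiliary dynamic system (4) for the bouncing ball satisfies Assumption 1 with restitution law Γ(0, v) = (0, -γ v). -/
/-!
Write `k = a² + ω²` and `c = 2 a`, so that the oscillator is underdamped with decay rate `a` and
frequency `ω`. In the rotating and growing frame, the two quantities
`e^{aτ} (q ω cos ωτ - (v + a q) sin ωτ)` and `e^{aτ} (q ω sin ωτ + (v + a q) cos ωτ)` have zero
derivative along the flow, hence are constant. This forces
`e^{aτ} q ω = v₀ sin ωτ` and `e^{aτ} (v + a q) = v₀ cos ωτ` (`damped_oscillator_solution`).
With `s = √(k / ((ln γ)² + π²))` one has `a = -s ln γ`, `ω = π s` and `τjump = 1 / s`, so `τjump`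
is exactly one half period and the decay factor over it is `e^{ln γ} = γ`.
-/

/-- The underdamped oscillator `q'' + 2 a q' + (a² + ω²) q = 0` on `[0, T]` with `q 0 = 0`,
solved explicitly; the identities are left multiplied by `e^{a τ}` so that no division occurs. -/
theorem damped_oscillator_solution {a ω T : ℝ} (hT : 0 < T) {q v : ℝ → ℝ}
    (hq' : ∀ τ ∈ Set.Icc 0 T, HasDerivWithinAt q (v τ) (Set.Icc 0 T) τ)
    (hv' : ∀ τ ∈ Set.Icc 0 T,
      HasDerivWithinAt v (-(a ^ 2 + ω ^ 2) * q τ - 2 * a * v τ) (Set.Icc 0 T) τ)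
    (hq0 : q 0 = 0) {τ : ℝ} (hτ : τ ∈ Set.Icc 0 T) :
    Real.exp (a * τ) * (q τ * ω) = v 0 * Real.sin (ω * τ) ∧
    Real.exp (a * τ) * (v τ + a * q τ) = v 0 * Real.cos (ω * τ) := by
  have const : ∀ f : ℝ → ℝ, (∀ x ∈ Set.Icc 0 T, HasDerivWithinAt f 0 (Set.Icc 0 T) x) →
      f τ = f 0 := fun f hf =>
    constant_of_derivWithin_zero (fun x hx => (hf x hx).differentiableWithinAt)
      (fun x hx => (hf x (Set.Ico_subset_Icc_self hx)).derivWithin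
        (uniqueDiffOn_Icc hT x (Set.Ico_subset_Icc_self hx))) τ hτ
  have hE : ∀ x, HasDerivAt (fun x => Real.exp (a * x)) (Real.exp (a * x) * (a * 1)) x :=
    fun x => ((hasDerivAt_id x).const_mul a).exp
  have hS : ∀ x, HasDerivAt (fun x => Real.sin (ω * x)) (Real.cos (ω * x) * (ω * 1)) x :=
    fun x => ((hasDerivAt_id x).const_mul ω).sin
  have hC : ∀ x, HasDerivAt (fun x => Real.cos (ω * x)) (-Real.sin (ω * x) * (ω * 1)) x :=
    fun x => ((hasDerivAt_id x).const_mul ω).cos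
  have h1 := const (fun x => Real.exp (a * x) *
      (q x * ω * Real.cos (ω * x) - (v x + a * q x) * Real.sin (ω * x))) (fun x hx => by
    refine ((hE x).hasDerivWithinAt.mul
      ((((hq' x hx).mul_const ω).mul (hC x).hasDerivWithinAt).sub
      (((hv' x hx).add ((hq' x hx).const_mul a)).mul (hS x).hasDerivWithinAt))).congr_deriv ?_
    simp only [Pi.add_apply, Pi.sub_apply, Pi.mul_apply]
    ring)
  have h2 := const (fun x => Real.exp (a * x) *
      (q x * ω * Real.sin (ω * x) + (v x + a * q x) * Real.cos (ω * x))) (fun x hx => by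
    refine ((hE x).hasDerivWithinAt.mul
      ((((hq' x hx).mul_const ω).mul (hS x).hasDerivWithinAt).add
      (((hv' x hx).add ((hq' x hx).const_mul a)).mul (hC x).hasDerivWithinAt))).congr_deriv ?_
    simp only [Pi.add_apply, Pi.sub_apply, Pi.mul_apply]
    ring)
  simp only [hq0, mul_zero, zero_mul, Real.exp_zero, Real.cos_zero, Real.sin_zero, sub_zero,
    add_zero, zero_add, one_mul, mul_one] at h1 h2
  -- Undo the rotation by `ω τ`.
  have hsc := Real.sin_sq_add_cos_sq (ω * τ)
  constructor
  · linear_combination Real.cos (ω * τ) * h1 + Real.sin (ω * τ) * h2 -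
      Real.exp (a * τ) * (q τ * ω) * hsc
  · linear_combination Real.cos (ω * τ) * h2 - Real.sin (ω * τ) * h1 -
      Real.exp (a * τ) * (v τ + a * q τ) * hsc

/-- The auxiliary spring-damper system for the bouncing ball with
c = 2|ln γ|√(k/((ln γ)²+π²)), started at q̃(0) = 0 with ṽ(0) = v₀ < 0, satisfies
Assumption 1 with Newton's restitution law Γ(0,v) = (0,-γv): (i) q̃ < 0 on (0, τ_jump);
(ii) q̃(τ_jump) = 0 and ṽ(τ_jump) = -γ v₀ > 0; (iii) τ_jump = √((π²+(ln γ)²)/k) is the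
first positive time at which q̃ vanishes. -/
theorem bouncing_ball_aux_satisfies_assumption (γ k : ℝ) (hγ : γ ∈ Set.Ioo (0 : ℝ) 1)
    (hk : 0 < k) (c τjump : ℝ)
    (hc : c = 2 * |Real.log γ| * Real.sqrt (k / ((Real.log γ) ^ 2 + Real.pi ^ 2)))
    (hτ : τjump = Real.sqrt ((Real.pi ^ 2 + (Real.log γ) ^ 2) / k))
    (v₀ : ℝ) (hv₀ : v₀ < 0) (q v : ℝ → ℝ)
    (hq' : ∀ τ ∈ Set.Icc 0 τjump, HasDerivWithinAt q (v τ) (Set.Icc 0 τjump) τ)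
    (hv' : ∀ τ ∈ Set.Icc 0 τjump,
      HasDerivWithinAt v (-k * q τ - c * v τ) (Set.Icc 0 τjump) τ)
    (hq0 : q 0 = 0) (hv0 : v 0 = v₀) :
    (∀ τ ∈ Set.Ioo 0 τjump, q τ < 0) ∧
    (q τjump = 0 ∧ v τjump = -γ * v₀ ∧ 0 < v τjump) ∧
    (∀ τ ∈ Set.Ioc 0 τjump, q τ = 0 → τ = τjump) := by
  obtain ⟨hγ0, hγ1⟩ := hγ
  have hlog : Real.log γ < 0 := Real.log_neg hγ0 hγ1
  have hπ := Real.pi_pos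
  have hD : 0 < Real.log γ ^ 2 + Real.pi ^ 2 := by positivity
  set s := Real.sqrt (k / (Real.log γ ^ 2 + Real.pi ^ 2)) with hs
  have hs0 : 0 < s := Real.sqrt_pos.2 (by positivity)
  have hs2 : s ^ 2 * (Real.log γ ^ 2 + Real.pi ^ 2) = k := by
    rw [hs, Real.sq_sqrt (by positivity)]
    field_simp
  have hτs : τjump = s⁻¹ := by
    rw [hτ, hs, ← Real.sqrt_inv, inv_div, add_comm]
  have hsT : s * τjump = 1 := by rw [hτs]; exact mul_inv_cancel₀ hs0.ne'
  have hT : 0 < τjump := by rw [hτs]; positivity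
  rw [abs_of_neg hlog] at hc
  have sol : ∀ τ ∈ Set.Icc 0 τjump, _ := fun τ hτ' =>
    damped_oscillator_solution (a := -s * Real.log γ) (ω := Real.pi * s) hT hq'
      (fun x hx => (hv' x hx).congr_deriv (by rw [hc, ← hs2]; ring)) hq0 hτ'
  rw [hv0] at sol
  have neg : ∀ τ ∈ Set.Ioo 0 τjump, q τ < 0 := by
    intro τ hτ'
    have h := (sol τ (Set.Ioo_subset_Icc_self hτ')).1
    have hsin : 0 < Real.sin (Real.pi * s * τ) := by
      apply Real.sin_pos_of_pos_of_lt_pi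
      · have := hτ'.1
        positivity
      · have : s * τ < 1 := hsT ▸ mul_lt_mul_of_pos_left hτ'.2 hs0
        nlinarith
    by_contra! hq
    have h0 : 0 ≤ Real.exp (-s * Real.log γ * τ) * (q τ * (Real.pi * s)) := by positivity
    have := mul_neg_of_neg_of_pos hv₀ hsin
    linarith
  have hend := sol τjump (Set.right_mem_Icc.2 hT.le)
  have hang : Real.pi * s * τjump = Real.pi := by rw [mul_assoc, hsT, mul_one]
  have hexp : Real.exp (-s * Real.log γ * τjump) = γ⁻¹ := by
    rw [show -s * Real.log γ * τjump = -Real.log γ by linear_combination -Real.log γ * hsT,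
      Real.exp_neg, Real.exp_log hγ0]
  rw [hang, hexp, Real.sin_pi, Real.cos_pi] at hend
  have hqT : q τjump = 0 := by
    have h := hend.1
    rw [mul_zero] at h
    simpa [hγ0.ne', hπ.ne', hs0.ne'] using h
  have hvT : v τjump = -γ * v₀ := by
    have h := hend.2
    rw [hqT, mul_zero, add_zero] at h
    field_simp at h
    linarith
  refine ⟨neg, ⟨hqT, hvT, ?_⟩, fun τ hτ' h0 => ?_⟩
  · rw [hvT]
    nlinarith
  · by_contra hne
    exact (neg τ ⟨hτ'.1, lt_of_le_of_ne hτ'.2 hne⟩).ne h0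
end

section
/- (Theorem 1, solution relationship for time-freezing.) Let f : ℝ^{n} → ℝ^{n} be locally Lipschitz, ψ : ℝ^{n} → ℝ continuous, φ : ℝ^{n} → ℝ^{n}, Γ a restitution map, and fix times 0 < t_s < t_f, τ_jump > 0, τ_s := t_s, τ_r := τ_s + τ_jump, τ_f := t_f + τ_jump. Suppose: (a) x : [0, t_f] → ℝ^{n} satisfies x'(t) = f(x(t)) on [0, t_s) and on (t_s, t_f], is continuous on [0, t_s) and on [t_s, t_f], has left limit x(t_s⁻) at t_s with ψ(x(t_s⁻)) = 0, and jumps according to x(t_s) = Γ(x(t_s⁻)), with ψ(x(t)) > 0 for t ∉ {t_s}; (b) y := (x̃, t) : [0, τ_f] → ℝ^{n} × ℝ is continuous, satisfies x̃'(τ) = f(x̃(τ)), t'(τ) = 1 and ψ(x̃(τ)) ≥ 0 on [0, τ_s] and on [τ_r, τ_f]; satisfies x̃'(τ) = φ(x̃(τ)), t'(τ) = 0 and ψ(x̃(τ)) < 0 on (τ_s, τ_r); satisfies x̃(τ_r) = Γ(x̃(τ_s)); and (c) x(0) = x̃(0) with ψ(x(0)) > 0, and t(0) = 0. Then for every τ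 ∈ [0, τ_f] with t(τ) ≠ t_s one has x(t(τ)) = x̃(τ); moreover t(τ) = τ for τ ∈ [0, τ_s] and t(τ) = τ - τ_jump for τ ∈ [τ_r, τ_f]. -/
/-!
The clock has slope `1`, `0`, `1` on the three phases `[0, τs]`, `[τs, τr]`, `[τr, τf]`, so
by continuity it is `τ`, then `ts`, then `τ - τjump`. Away from clock value `ts` only the first
and the last phase matter, and there `xt`, read in clock time, solves the same autonomous
equation `z' = f z` as `x`. Uniqueness for locally Lipschitz `f`
(`eqOn_Icc_of_ode_of_locallyLipschitz`) identifies the two on the first phase from the common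
value at `0`. Letting `t ↑ ts` gives `xt τs = xl`, so the jump law and the auxiliary phase restart
both trajectories from `Γ xl`, and uniqueness applies again on the last phase.
-/

open Filter Topology

open Set in
/-- A solution of `z' = f z` on an open interval that is continuous up to the left endpoint has
right derivative `f (z a)` there, since its derivative `f ∘ z` has that limit. -/
lemma hasDerivWithinAt_Ici_left_of_ode {E : Type*} [NormedAddCommGroup E] [NormedSpace ℝ E]
    {f : E → E} (hf : Continuous f) {u : ℝ → E} {a b : ℝ} (hab : a < b)
    (hu : ContinuousOn u (Icc a b)) (hu' : ∀ t ∈ Ioo a b, HasDerivAt u (f (u t)) t) :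
    HasDerivWithinAt u (f (u a)) (Ici a) a := by
  have hmem : Ioo a b ∈ 𝓝[>] a := Ioo_mem_nhdsGT hab
  have hc : ContinuousWithinAt u (Ioo a b) a :=
    (hu a (left_mem_Icc.2 hab.le)).mono Ioo_subset_Icc_self
  refine hasDerivWithinAt_Ici_of_tendsto_deriv
    (fun t ht => (hu' t ht).differentiableAt.differentiableWithinAt) hc hmem ?_
  have hlim : Tendsto (fun t => f (u t)) (𝓝[>] a) (𝓝 (f (u a))) := by
    rw [← nhdsWithin_Ioo_eq_nhdsGT hab]
    exact (hf.tendsto _).comp hc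
  refine hlim.congr' ?_
  filter_upwards [hmem] with t ht using (hu' t ht).deriv.symm

open Set in
/-- Uniqueness for an autonomous ODE with locally Lipschitz right-hand side, the equation being
required only in the interior of the interval. Both trajectories have compact range, and `f` is
Lipschitz on the union of these ranges, so no global Lipschitz bound is needed. -/
lemma eqOn_Icc_of_ode_of_locallyLipschitz {E : Type*} [NormedAddCommGroup E] [NormedSpace ℝ E]
    {f : E → E} (hf : LocallyLipschitz f) {u v : ℝ → E} {a b : ℝ}
    (hu : ContinuousOn u (Icc a b)) (hu' : ∀ t ∈ Ioo a b, HasDerivAt u (f (u t)) t)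
    (hv : ContinuousOn v (Icc a b)) (hv' : ∀ t ∈ Ioo a b, HasDerivAt v (f (v t)) t)
    (ha : u a = v a) : EqOn u v (Icc a b) := by
  obtain ⟨K, hK⟩ := LocallyLipschitzOn.exists_lipschitzOnWith_of_compact
    ((isCompact_Icc.image_of_continuousOn hu).union (isCompact_Icc.image_of_continuousOn hv))
    hf.locallyLipschitzOn
  have key : ∀ w : ℝ → E, ContinuousOn w (Icc a b) →
      (∀ t ∈ Ioo a b, HasDerivAt w (f (w t)) t) →
      ∀ t ∈ Ico a b, HasDerivWithinAt w (f (w t)) (Ici t) t := by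
    intro w hw hw' t ht
    rcases ht.1.eq_or_lt with rfl | hlt
    · exact hasDerivWithinAt_Ici_left_of_ode hf.continuous ht.2 hw hw'
    · exact (hw' t ⟨hlt, ht.2⟩).hasDerivWithinAt
  exact ODE_solution_unique_of_mem_Icc_right (v := fun _ => f) (fun _ _ => hK)
    hu (key u hu hu') (fun t ht => Or.inl (mem_image_of_mem u (Ico_subset_Icc_self ht)))
    hv (key v hv hv') (fun t ht => Or.inr (mem_image_of_mem v (Ico_subset_Icc_self ht))) ha

/-- Theorem 1, solution relationship for time-freezing.
The solution x of the ODE with one state jump at t_s (via the restitution map Γ) and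
the solution y = (x̃, clk) of the time-frozen system are related by
x(clk(τ)) = x̃(τ) for all τ with clk(τ) ≠ t_s; moreover clk(τ) = τ before the frozen
phase and clk(τ) = τ - τ_jump after it. -/
theorem time_freezing_solution_relationship
    (nx : ℕ) (f φ Γ : EuclideanSpace ℝ (Fin nx) → EuclideanSpace ℝ (Fin nx))
    (ψ : EuclideanSpace ℝ (Fin nx) → ℝ)
    (hf : LocallyLipschitz f) (hψ : Continuous ψ)
    (ts tf τjump τs τr τf : ℝ)
    (hts : 0 < ts) (htf : ts < tf) (hτjump : 0 < τjump)
    (hτs : τs = ts) (hτr : τr = τs + τjump) (hτf : τf = tf + τjump)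
    -- (a) the original system with a state jump at ts
    (x : ℝ → EuclideanSpace ℝ (Fin nx)) (xl : EuclideanSpace ℝ (Fin nx))
    (hx_ode1 : ∀ t ∈ Set.Ico 0 ts, HasDerivWithinAt x (f (x t)) (Set.Ico 0 ts) t)
    (hx_ode2 : ∀ t ∈ Set.Ioc ts tf, HasDerivWithinAt x (f (x t)) (Set.Ioc ts tf) t)
    (hx_cont1 : ContinuousOn x (Set.Ico 0 ts))
    (hx_cont2 : ContinuousOn x (Set.Icc ts tf))
    (hx_leftlim : Tendsto x (𝓝[<] ts) (𝓝 xl))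
    (hψ_xl : ψ xl = 0)
    (hx_jump : x ts = Γ xl)
    (hx_feas : ∀ t ∈ Set.Icc 0 tf, t ≠ ts → 0 < ψ (x t))
    -- (b) the time-frozen system y = (x̃, clk)
    (xt : ℝ → EuclideanSpace ℝ (Fin nx)) (clk : ℝ → ℝ)
    (hxt_cont : ContinuousOn xt (Set.Icc 0 τf))
    (hclk_cont : ContinuousOn clk (Set.Icc 0 τf))
    (hxt_ode1 : ∀ τ ∈ Set.Icc 0 τs, HasDerivWithinAt xt (f (xt τ)) (Set.Icc 0 τs) τ)
    (hclk_ode1 : ∀ τ ∈ Set.Icc 0 τs, HasDerivWithinAt clk 1 (Set.Icc 0 τs) τ)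
    (hψ_nonneg1 : ∀ τ ∈ Set.Icc 0 τs, 0 ≤ ψ (xt τ))
    (hxt_ode3 : ∀ τ ∈ Set.Icc τr τf, HasDerivWithinAt xt (f (xt τ)) (Set.Icc τr τf) τ)
    (hclk_ode3 : ∀ τ ∈ Set.Icc τr τf, HasDerivWithinAt clk 1 (Set.Icc τr τf) τ)
    (hψ_nonneg3 : ∀ τ ∈ Set.Icc τr τf, 0 ≤ ψ (xt τ))
    (hxt_ode2 : ∀ τ ∈ Set.Ioo τs τr, HasDerivAt xt (φ (xt τ)) τ)
    (hclk_ode2 : ∀ τ ∈ Set.Ioo τs τr, HasDerivAt clk 0 τ)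
    (hψ_neg2 : ∀ τ ∈ Set.Ioo τs τr, ψ (xt τ) < 0)
    (hxt_jump : xt τr = Γ (xt τs))
    -- (c) initial conditions
    (hx0 : x 0 = xt 0) (hψ0 : 0 < ψ (x 0)) (hclk0 : clk 0 = 0) :
    (∀ τ ∈ Set.Icc 0 τf, clk τ ≠ ts → x (clk τ) = xt τ) ∧
    (∀ τ ∈ Set.Icc 0 τs, clk τ = τ) ∧
    (∀ τ ∈ Set.Icc τr τf, clk τ = τ - τjump) := by
  subst τs τr τf
  have h1 : ∀ τ ∈ Set.Icc 0 ts, clk τ = τ :=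
    eqOn_Icc_of_ode_of_locallyLipschitz (f := fun _ => (1 : ℝ)) (LocallyLipschitz.const 1)
      (hclk_cont.mono (Set.Icc_subset_Icc_right (by linarith)))
      (fun t ht => (hclk_ode1 t (Set.Ioo_subset_Icc_self ht)).hasDerivAt (Icc_mem_nhds ht.1 ht.2))
      continuousOn_id (fun t _ => hasDerivAt_id t) hclk0
  have h2 : ∀ τ ∈ Set.Icc ts (ts + τjump), clk τ = ts :=
    eqOn_Icc_of_ode_of_locallyLipschitz (f := fun _ => (0 : ℝ)) (LocallyLipschitz.const 0)
      (hclk_cont.mono (Set.Icc_subset_Icc hts.le (by linarith)))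
      hclk_ode2 continuousOn_const (fun t _ => hasDerivAt_const t ts)
      (h1 ts ⟨hts.le, le_rfl⟩)
  have h3 : ∀ τ ∈ Set.Icc (ts + τjump) (tf + τjump), clk τ = τ - τjump :=
    eqOn_Icc_of_ode_of_locallyLipschitz (f := fun _ => (1 : ℝ)) (LocallyLipschitz.const 1)
      (hclk_cont.mono (Set.Icc_subset_Icc_left (by linarith)))
      (fun t ht => (hclk_ode3 t (Set.Ioo_subset_Icc_self ht)).hasDerivAt (Icc_mem_nhds ht.1 ht.2))
      (by fun_prop) (fun t _ => (hasDerivAt_id t).sub_const τjump)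
      (by rw [h2 _ ⟨by linarith, le_rfl⟩]; ring)
  -- `x` may jump at `ts`, so uniqueness is applied on `[0, t]` for each `t < ts`.
  have hpre : ∀ t ∈ Set.Ico 0 ts, x t = xt t := by
    intro t ht
    refine eqOn_Icc_of_ode_of_locallyLipschitz hf (a := 0) (b := t)
      (hx_cont1.mono fun s hs => ⟨hs.1, hs.2.trans_lt ht.2⟩)
      (fun s hs => (hx_ode1 s ⟨hs.1.le, hs.2.trans ht.2⟩).hasDerivAt
        (Ico_mem_nhds hs.1 (hs.2.trans ht.2)))
      (hxt_cont.mono (Set.Icc_subset_Icc_right (by linarith [ht.2])))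
      (fun s hs => (hxt_ode1 s ⟨hs.1.le, (hs.2.trans ht.2).le⟩).hasDerivAt
        (Icc_mem_nhds hs.1 (hs.2.trans ht.2)))
      hx0 ⟨ht.1, le_rfl⟩
  have hxl : xt ts = xl := by
    have hc : Tendsto xt (𝓝[<] ts) (𝓝 (xt ts)) := by
      rw [← nhdsWithin_Ico_eq_nhdsLT hts]
      exact (hxt_cont ts ⟨hts.le, by linarith⟩).mono
        fun s hs => ⟨hs.1, by linarith [hs.2]⟩
    refine tendsto_nhds_unique hc (hx_leftlim.congr' ?_)
    filter_upwards [Ico_mem_nhdsLT hts] with t ht using hpre t ht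
  have hpost : ∀ t ∈ Set.Icc ts tf, x t = xt (t + τjump) :=
    eqOn_Icc_of_ode_of_locallyLipschitz hf hx_cont2
      (fun t ht => (hx_ode2 t (Set.Ioo_subset_Ioc_self ht)).hasDerivAt (Ioc_mem_nhds ht.1 ht.2))
      (hxt_cont.comp (by fun_prop)
        fun t ht => ⟨by linarith [ht.1], by linarith [ht.2]⟩)
      (fun t ht => HasDerivAt.comp_add_const t τjump
        ((hxt_ode3 (t + τjump) ⟨by linarith [ht.1], by linarith [ht.2]⟩).hasDerivAt
          (Icc_mem_nhds (by linarith [ht.1]) (by linarith [ht.2]))))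
      (by rw [hx_jump, hxt_jump, hxl])
  refine ⟨fun τ hτ hne => ?_, h1, h3⟩
  rcases le_total τ ts with hle | hge
  · have hc := h1 τ ⟨hτ.1, hle⟩
    rw [hc] at hne ⊢
    exact hpre τ ⟨hτ.1, lt_of_le_of_ne hle hne⟩
  · rcases le_total τ (ts + τjump) with hle' | hge'
    · exact absurd (h2 τ ⟨hge, hle'⟩) hne
    · rw [h3 τ ⟨hge', hτ.2⟩, hpost (τ - τjump) ⟨by linarith, by linarith [hτ.2]⟩,
        sub_add_cancel]
end
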